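/- (VC-theorem for thickets) Let (X, μ) be a finite probability space, F a family of subsets of X, and ρ_F the thicket shatter function of F. Then for any integer n ≥ 1 and any ε > 0, the μ^{2^n−1}-probability of the set of tuples x̄ = (x_σ)_{σ ∈ 2^{<n}} ∈ X^{2^n−1} such that sup_{S ∈ F} |test(x̄, S) − μ(S)| > ε is at most 8 · ρ_F(n) · exp(−nε²/32). -/

import Mathlib

open MeasureTheory

/- The characteristic path of `S` through a test tree `x = (x_σ)_{σ ∈ 2^{<n}}` (a node
`σ` of length `i < n` is encoded as the pair `⟨i, σ⟩` in `Σ i : Fin n, (Fin i → Bool)`). -/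
open Classical in
noncomputable def charPath {X : Type*} (S : Set X) {n : ℕ}
    (x : (Σ i : Fin n, (Fin i.1 → Bool)) → X) (m : ℕ) (hm : m < n) : Bool :=
  if x ⟨⟨m, hm⟩, fun j : Fin m => charPath S x j.1 (j.2.trans hm)⟩ ∈ S then true else false
termination_by m

/-- `test(x̄, S)`: the fraction of the `n` elements along the characteristic path of `S`
through the test tree `x̄` that lie in `S`. -/
noncomputable def ttest {X : Type*} (S : Set X) {n : ℕ}
    (x : (Σ i : Fin n, (Fin i.1 → Bool)) → X) : ℝ :=
  (Finset.univ.filter (fun m : Fin n => charPath S x m.1 m.2 = true)).card / n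

/-- A leaf `τ ∈ 2^n` of a binary element tree `T` is properly labeled by `A ⊆ X` if for all
`m < n`, `T(τ|_{[m]}) ∈ A` iff `τ(m) = 1`. -/
def ProperlyLabeled {X : Type*} (T : List Bool → X) {n : ℕ} (τ : Fin n → Bool)
    (A : Set X) : Prop :=
  ∀ m : Fin n, (T ((List.ofFn τ).take m.1) ∈ A ↔ τ m = true)

/-- The thicket shatter function `ρ_F(n)`: the maximum, over binary element trees of
height `n` with labels from `X`, of the number of leaves properly labeled by some
member of `F`. -/
noncomputable def thicketShatter {X : Type*} (F : Set (Set X)) (n : ℕ) : ℕ :=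
  sSup {m : ℕ | ∃ T : List Bool → X,
    m = {τ : Fin n → Bool | ∃ A ∈ F, ProperlyLabeled T τ A}.ncard}

/-!
Fix a real `l` and bound the exponential moment `E sup_{S ∈ G} exp (l * n * (test(x̄, S) - μ(S)))`
by induction on the height `n`. At the root, Jensen's inequality replaces `μ(S)` by the indicator of
`S` at an independent ghost draw. Exchanging the root label with the ghost draw leaves the
distribution unchanged and turns the factor of that level into a hyperbolic cosine, which is at most
`exp (l ^ 2 / 2)`. Splitting `G` according to the answers at the two points consumes two levels of
the thicket shatter function, because element trees for the four parts fit together into one element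
tree for `G`. Hence the moment is at most `exp (n * l ^ 2 / 2) * ρ(2n)`, and `ρ(2n) ≤ ρ(n) ^ 2`.
Markov's inequality with `l = ±ε` bounds the probability by `2 * t ^ 2`, where
`t = ρ(n) * exp (-n * ε ^ 2 / 4)`.
-/

namespace Thicket

variable {X : Type*}

/-- The leaves of the element tree `T` of height `n` that are properly labeled by a member of `F`,
so that `thicketShatter F n` is the largest cardinality of such a set. -/
def labeledLeaves (T : List Bool → X) (F : Set (Set X)) (n : ℕ) : Set (Fin n → Bool) :=
  {τ | ∃ A ∈ F, ProperlyLabeled T τ A}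

theorem bddAbove_ncard_labeledLeaves (F : Set (Set X)) (n : ℕ) :
    BddAbove {m : ℕ | ∃ T : List Bool → X, m = (labeledLeaves T F n).ncard} := by
  refine ⟨Nat.card (Fin n → Bool), ?_⟩
  rintro _ ⟨T, rfl⟩
  exact Set.ncard_le_card _

theorem ncard_labeledLeaves_le_thicketShatter (T : List Bool → X) (F : Set (Set X)) (n : ℕ) :
    (labeledLeaves T F n).ncard ≤ thicketShatter F n :=
  le_csSup (bddAbove_ncard_labeledLeaves F n) ⟨T, rfl⟩

theorem exists_ncard_labeledLeaves_eq_thicketShatter [Nonempty X] (F : Set (Set X)) (n : ℕ) :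
    ∃ T : List Bool → X, (labeledLeaves T F n).ncard = thicketShatter F n := by
  have hne : {m : ℕ | ∃ T : List Bool → X, m = (labeledLeaves T F n).ncard}.Nonempty :=
    ⟨_, fun _ => Classical.arbitrary X, rfl⟩
  obtain ⟨T, hT⟩ := Nat.sSup_mem hne (bddAbove_ncard_labeledLeaves F n)
  exact ⟨T, hT.symm⟩

theorem thicketShatter_pos [Nonempty X] {F : Set (Set X)} (hF : F.Nonempty) (n : ℕ) :
    0 < thicketShatter F n := by
  classical
  obtain ⟨A, hA⟩ := hF
  let a := Classical.arbitrary X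
  have hleaf : (fun _ => decide (a ∈ A)) ∈ labeledLeaves (fun _ => a) F n :=
    ⟨A, hA, fun m => by simp⟩
  exact ((Set.ncard_pos (Set.toFinite _)).2 ⟨_, hleaf⟩).trans_le
    (ncard_labeledLeaves_le_thicketShatter _ F n)

theorem properlyLabeled_append {T : List Bool → X} {m n : ℕ} {σ : Fin m → Bool} {τ : Fin n → Bool}
    {A : Set X} : ProperlyLabeled T (Fin.append σ τ) A ↔
      ProperlyLabeled T σ A ∧ ProperlyLabeled (fun l => T (List.ofFn σ ++ l)) τ A := by
  simp only [ProperlyLabeled, Fin.forall_fin_add, List.ofFn_fin_append, Fin.append_left,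
    Fin.append_right, Fin.val_castAdd, Fin.val_natAdd]
  refine and_congr (forall_congr' fun i => ?_) (forall_congr' fun j => ?_)
  · rw [List.take_append_of_le_length (by simp [i.2.le])]
  · simp [List.take_append, List.take_of_length_le]

theorem labeledLeaves_add_subset (T : List Bool → X) (F : Set (Set X)) (m n : ℕ) :
    labeledLeaves T F (m + n) ⊆ ⋃ σ ∈ (labeledLeaves T F m).toFinite.toFinset,
      Fin.append σ '' labeledLeaves (fun l => T (List.ofFn σ ++ l)) F n := by
  rintro υ ⟨A, hA, hυ⟩
  rw [← Fin.append_castAdd_natAdd (f := υ), properlyLabeled_append] at hυ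
  simp only [Set.Finite.mem_toFinset, Set.mem_iUnion]
  exact ⟨_, ⟨A, hA, hυ.1⟩, _, ⟨A, hA, hυ.2⟩, Fin.append_castAdd_natAdd⟩

theorem thicketShatter_add_le (F : Set (Set X)) (m n : ℕ) :
    thicketShatter F (m + n) ≤ thicketShatter F m * thicketShatter F n := by
  refine csSup_le' ?_
  rintro _ ⟨T, rfl⟩
  set prefixes := (labeledLeaves T F m).toFinite.toFinset
  calc (labeledLeaves T F (m + n)).ncard
      ≤ (⋃ σ ∈ prefixes, Fin.append σ '' labeledLeaves (fun l => T (List.ofFn σ ++ l)) F n).ncard :=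
        Set.ncard_le_ncard (labeledLeaves_add_subset T F m n) (Set.toFinite _)
    _ ≤ ∑ σ ∈ prefixes, (Fin.append σ '' labeledLeaves (fun l => T (List.ofFn σ ++ l)) F n).ncard :=
        Finset.set_ncard_biUnion_le _ _
    _ ≤ prefixes.card * thicketShatter F n :=
        Finset.sum_le_card_nsmul _ _ _ fun σ _ => (Set.ncard_image_le (Set.toFinite _)).trans
          (ncard_labeledLeaves_le_thicketShatter _ F n)
    _ ≤ thicketShatter F m * thicketShatter F n := by
        rw [← Set.ncard_eq_toFinset_card]
        gcongr
        exact ncard_labeledLeaves_le_thicketShatter T F m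

/-- The members of `G` that contain `a` (for `b = true`) or omit `a` (for `b = false`). -/
def cut (G : Set (Set X)) (a : X) (b : Bool) : Set (Set X) :=
  {S ∈ G | a ∈ S ↔ b = true}

theorem mem_cut {G : Set (Set X)} {a : X} {b : Bool} {S : Set X} :
    S ∈ cut G a b ↔ S ∈ G ∧ (a ∈ S ↔ b = true) :=
  Iff.rfl

theorem cut_subset (G : Set (Set X)) (a : X) (b : Bool) : cut G a b ⊆ G :=
  Set.sep_subset _ _

theorem cut_comm (G : Set (Set X)) (a a' : X) (b b' : Bool) :
    cut (cut G a b) a' b' = cut (cut G a' b') a b := by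
  ext S
  simp only [mem_cut, and_right_comm]

/-- The element tree with root `a` and the trees `T false`, `T true` below it. -/
def join (a : X) (T : Bool → List Bool → X) : List Bool → X
  | [] => a
  | b :: l => T b l

theorem properlyLabeled_join_cons {a : X} {T : Bool → List Bool → X} {n : ℕ} {b : Bool}
    {τ : Fin n → Bool} {A : Set X} :
    ProperlyLabeled (join a T) (Fin.cons b τ : Fin (n + 1) → Bool) A ↔
      (a ∈ A ↔ b = true) ∧ ProperlyLabeled (T b) τ A := by
  simp [ProperlyLabeled, Fin.forall_fin_succ, List.ofFn_succ, join]

theorem image_cons_labeledLeaves_subset (G : Set (Set X)) (a : X) (T : Bool → List Bool → X)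
    (n : ℕ) (b : Bool) :
    Fin.cons (α := fun _ => Bool) b '' labeledLeaves (T b) (cut G a b) n ⊆
      labeledLeaves (join a T) G (n + 1) := by
  rintro _ ⟨τ, ⟨A, hA, hτ⟩, rfl⟩
  exact ⟨A, hA.1, properlyLabeled_join_cons.2 ⟨hA.2, hτ⟩⟩

theorem sum_thicketShatter_cut_le (G : Set (Set X)) (a : X) (n : ℕ) :
    ∑ b, thicketShatter (cut G a b) n ≤ thicketShatter G (n + 1) := by
  have : Nonempty X := ⟨a⟩
  choose T hT using fun b => exists_ncard_labeledLeaves_eq_thicketShatter (cut G a b) n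
  let leavesBelow (b : Bool) : Set (Fin (n + 1) → Bool) :=
    Fin.cons (α := fun _ => Bool) b '' labeledLeaves (T b) (cut G a b) n
  have hcard (b : Bool) : (leavesBelow b).ncard = thicketShatter (cut G a b) n := by
    rw [Set.ncard_image_of_injective _ (Fin.cons_right_injective (α := fun _ => Bool) b), hT]
  have hdisjoint : Disjoint (leavesBelow true) (leavesBelow false) := by
    rw [Set.disjoint_left]
    rintro _ ⟨τ, -, rfl⟩ ⟨τ', -, h⟩
    simpa using congrFun h 0
  calc ∑ b, thicketShatter (cut G a b) n
      = (leavesBelow true ∪ leavesBelow false).ncard := by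
        rw [Set.ncard_union_eq hdisjoint (Set.toFinite _) (Set.toFinite _), hcard, hcard,
          Fintype.sum_bool]
    _ ≤ (labeledLeaves (join a T) G (n + 1)).ncard :=
        Set.ncard_le_ncard (Set.union_subset (image_cons_labeledLeaves_subset G a T n true)
          (image_cons_labeledLeaves_subset G a T n false)) (Set.toFinite _)
    _ ≤ thicketShatter G (n + 1) := ncard_labeledLeaves_le_thicketShatter _ G (n + 1)

theorem sum_sum_thicketShatter_cut_cut_le (G : Set (Set X)) (a a' : X) (n : ℕ) :
    ∑ b, ∑ b', thicketShatter (cut (cut G a b) a' b') n ≤ thicketShatter G (n + 2) :=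
  (Finset.sum_le_sum fun b _ => sum_thicketShatter_cut_le (cut G a b) a' n).trans
    (sum_thicketShatter_cut_le G a (n + 1))

/-- The nodes `σ ∈ 2^{<n}` of a test tree of height `n`, in the encoding used by `charPath`. -/
abbrev Node (n : ℕ) : Type := Σ i : Fin n, (Fin i.1 → Bool)

/-- The empty sequence. -/
def root (n : ℕ) : Node (n + 1) := ⟨0, Fin.elim0⟩

/-- The sequence `σ` with `b` put in front, so that `child b` embeds a tree of height `n` as the
half of a tree of height `n + 1` that lies below the answer `b` at the root. -/
def child {n : ℕ} (b : Bool) (σ : Node n) : Node (n + 1) :=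
  ⟨σ.1.succ, (Fin.cons b σ.2 : Fin (σ.1.1 + 1) → Bool)⟩

theorem child_injective {n : ℕ} (b : Bool) : Function.Injective (child (n := n) b) := by
  rintro ⟨i, σ⟩ ⟨j, τ⟩ h
  obtain rfl : i = j := Fin.succ_injective n (congrArg Sigma.fst h)
  simpa [child] using h

theorem root_ne_child {n : ℕ} (b : Bool) (σ : Node n) : root n ≠ child b σ :=
  fun h => (Fin.succ_ne_zero σ.1).symm (congrArg Sigma.fst h)

/-- The part of a test tree that lies below the answer `b` at its root. -/
def subtree {n : ℕ} (b : Bool) (x : Node (n + 1) → X) : Node n → X :=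
  fun σ => x (child b σ)

theorem charPath_zero (S : Set X) {n : ℕ} (x : Node (n + 1) → X) :
    charPath S x 0 n.succ_pos = true ↔ x (root n) ∈ S := by
  have hnode : (⟨⟨0, n.succ_pos⟩, fun j : Fin 0 => charPath S x j.1 (j.2.trans n.succ_pos)⟩ :
      Node (n + 1)) = root n :=
    congrArg (Sigma.mk 0) (funext fun j => j.elim0)
  rw [charPath, hnode]
  simp

theorem charPath_succ (S : Set X) {n : ℕ} (x : Node (n + 1) → X) {b : Bool}
    (hb : x (root n) ∈ S ↔ b = true) {m : ℕ} (hm : m < n) :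
    charPath S x (m + 1) (Nat.succ_lt_succ hm) = charPath S (subtree b x) m hm := by
  induction m using Nat.strong_induction_on with
  | _ m ih =>
    have hpath : (fun j : Fin (m + 1) => charPath S x j.1 (j.2.trans (Nat.succ_lt_succ hm))) =
        Fin.cons b fun j : Fin m => charPath S (subtree b x) j.1 (j.2.trans hm) := by
      refine funext (Fin.cases ?_ fun j => ?_)
      · exact Bool.eq_iff_iff.2 ((charPath_zero S x).trans hb)
      · exact ih j.1 j.2 (j.2.trans hm)
    rw [charPath, charPath, hpath]
    rfl

/-- The number of elements along the characteristic path of `S` through `x` that lie in `S`. -/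
noncomputable def hits (S : Set X) {n : ℕ} (x : Node n → X) : ℕ :=
  (Finset.univ.filter fun m : Fin n => charPath S x m.1 m.2 = true).card

theorem hits_succ (S : Set X) {n : ℕ} (x : Node (n + 1) → X) {b : Bool}
    (hb : x (root n) ∈ S ↔ b = true) : hits S x = b.toNat + hits S (subtree b x) := by
  have hroot : (charPath S x 0 n.succ_pos = true) = (b = true) :=
    propext ((charPath_zero S x).trans hb)
  simp only [hits, Finset.card_filter, Fin.sum_univ_succ, Fin.val_zero, Fin.val_succ, hroot,
    charPath_succ S x hb (Fin.is_lt _)]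
  cases b <;> rfl

theorem ttest_sub_eq_div (S : Set X) {n : ℕ} (hn : 0 < n) (x : Node n → X) (p : ℝ) :
    ttest S x - p = (hits S x - n * p) / n := by
  have : (n : ℝ) ≠ 0 := by exact_mod_cast hn.ne'
  change (hits S x / n : ℝ) - p = _
  field_simp

/-- The exponential of a real number as an extended nonnegative real. -/
noncomputable def ennexp (t : ℝ) : ENNReal := ENNReal.ofReal (Real.exp t)

theorem ennexp_zero : ennexp 0 = 1 := by simp [ennexp]

theorem ennexp_ne_top (t : ℝ) : ennexp t ≠ ⊤ := ENNReal.ofReal_ne_top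

theorem ennexp_add (s t : ℝ) : ennexp (s + t) = ennexp s * ennexp t := by
  rw [ennexp, Real.exp_add, ENNReal.ofReal_mul (Real.exp_pos s).le, ennexp, ennexp]

theorem ennexp_nat_mul (n : ℕ) (t : ℝ) : ennexp (n * t) = ennexp t ^ n := by
  rw [ennexp, Real.exp_nat_mul, ENNReal.ofReal_pow (Real.exp_pos t).le, ennexp]

theorem ennexp_mono : Monotone ennexp :=
  fun _ _ h => ENNReal.ofReal_le_ofReal (Real.exp_le_exp.2 h)

theorem measurable_ennexp : Measurable ennexp :=
  Real.measurable_exp.ennreal_ofReal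

theorem ennexp_add_ennexp_neg_le (t : ℝ) : ennexp t + ennexp (-t) ≤ 2 * ennexp (t ^ 2 / 2) := by
  have hcosh := Real.cosh_le_exp_half_sq t
  rw [Real.cosh_eq] at hcosh
  rw [ennexp, ennexp, ennexp, ← ENNReal.ofReal_add (Real.exp_pos t).le (Real.exp_pos (-t)).le,
    ← ENNReal.ofReal_ofNat 2, ← ENNReal.ofReal_mul zero_le_two]
  exact ENNReal.ofReal_le_ofReal (by linarith)

section ProductMeasure

theorem measurePreserving_pi_comp {ι κ : Type*} [Fintype ι] [Fintype κ] [MeasurableSpace X]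
    (μ : ι → Measure X) [∀ i, IsProbabilityMeasure (μ i)] {e : κ → ι} (he : e.Injective) :
    MeasurePreserving (fun x : ι → X => x ∘ e) (Measure.pi μ) (Measure.pi (μ ∘ e)) := by
  classical
  have hmeas : Measurable fun x : ι → X => x ∘ e :=
    measurable_pi_lambda _ fun k => measurable_pi_apply (e k)
  have (k : κ) : IsProbabilityMeasure ((μ ∘ e) k) :=
    inferInstanceAs (IsProbabilityMeasure (μ (e k)))
  refine ⟨hmeas, (Measure.pi_eq fun s hs => ?_).symm⟩
  have hpreimage : (fun x : ι → X => x ∘ e) ⁻¹' Set.univ.pi s =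
      (Finset.univ.image e : Set ι).pi (Function.extend e s fun _ => Set.univ) := by
    ext x
    simp [Set.mem_pi, he.extend_apply]
  rw [Measure.map_apply hmeas (MeasurableSet.univ_pi hs), hpreimage, Measure.pi_pi_finset,
    Finset.prod_image fun _ _ _ _ h => he h]
  simp [he.extend_apply]

variable [MeasurableSpace X] (μ : Measure X)

/-- The distribution of a random test tree of height `n` with independent labels of law `μ`. -/
noncomputable abbrev treeMeasure (n : ℕ) : Measure (Node n → X) :=
  Measure.pi fun _ : Node n => μ

theorem measurable_subtree {n : ℕ} (b : Bool) :
    Measurable (subtree b : (Node (n + 1) → X) → Node n → X) :=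
  measurable_pi_lambda _ fun σ => measurable_pi_apply (child b σ)

theorem measurePreserving_subtree_root [IsProbabilityMeasure μ] (n : ℕ) (b : Bool) :
    MeasurePreserving (fun x => (subtree b x, x (root n))) (treeMeasure μ (n + 1))
      ((treeMeasure μ n).prod μ) := by
  have hinj : (fun o : Option (Node n) => o.elim (root n) (child b)).Injective := by
    rintro (_ | σ) (_ | τ) h
    · rfl
    · exact (root_ne_child b τ h).elim
    · exact (root_ne_child b σ h.symm).elim
    · exact congrArg some (child_injective b h)
  have hoption : MeasurePreserving (MeasurableEquiv.piOptionEquivProd fun _ : Option (Node n) => X)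
      (Measure.pi fun _ => μ) ((treeMeasure μ n).prod μ) :=
    MeasurePreserving.symm (MeasurableEquiv.piOptionEquivProd _).symm
      ⟨MeasurableEquiv.measurable _, Measure.pi_map_piOptionEquivProd (β := fun _ => X) fun _ => μ⟩
  exact hoption.comp (measurePreserving_pi_comp (fun _ : Node (n + 1) => μ) hinj)

theorem lintegral_lintegral_subtree_root [IsProbabilityMeasure μ] {n : ℕ} (b : Bool)
    {f : (Node n → X) × X × X → ENNReal} (hf : Measurable f) :
    ∫⁻ x, ∫⁻ a', f (subtree b x, x (root n), a') ∂μ ∂treeMeasure μ (n + 1) =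
      ∫⁻ p, ∫⁻ y, f (y, p) ∂treeMeasure μ n ∂μ.prod μ := by
  have hpreserving : MeasurePreserving
      (fun z : (Node (n + 1) → X) × X => (subtree b z.1, z.1 (root n), z.2))
      ((treeMeasure μ (n + 1)).prod μ) ((treeMeasure μ n).prod (μ.prod μ)) :=
    (measurePreserving_prodAssoc _ _ _).comp
      ((measurePreserving_subtree_root μ n b).prod (MeasurePreserving.id μ))
  calc ∫⁻ x, ∫⁻ a', f (subtree b x, x (root n), a') ∂μ ∂treeMeasure μ (n + 1)
      = ∫⁻ z, f (subtree b z.1, z.1 (root n), z.2) ∂(treeMeasure μ (n + 1)).prod μ :=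
        (lintegral_prod _ (hf.comp hpreserving.measurable).aemeasurable).symm
    _ = ∫⁻ w, f w ∂(treeMeasure μ n).prod (μ.prod μ) := hpreserving.lintegral_comp hf
    _ = ∫⁻ p, ∫⁻ y, f (y, p) ∂treeMeasure μ n ∂μ.prod μ := lintegral_prod_symm _ hf.aemeasurable

end ProductMeasure

section Symmetrization

variable [MeasurableSpace X] (μ : Measure X)

theorem ennexp_neg_mul_measureReal_le_lintegral [IsProbabilityMeasure μ] {S : Set X}
    (hS : MeasurableSet S) (l : ℝ) :
    ennexp (-(l * μ.real S)) ≤ ∫⁻ a, ennexp (-(l * S.indicator 1 a)) ∂μ := by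
  have hint : Integrable (fun a => -(l * S.indicator 1 a)) μ :=
    (((integrable_const 1).indicator hS).const_mul l).neg
  have hexp (a : X) : Real.exp (-(l * S.indicator 1 a)) =
      S.indicator (fun _ => Real.exp (-l)) a + Sᶜ.indicator (fun _ => 1) a := by
    by_cases ha : a ∈ S <;> simp [ha]
  have hint_exp : Integrable (fun a => Real.exp (-(l * S.indicator 1 a))) μ := by
    simp only [hexp]
    exact ((integrable_const _).indicator hS).add ((integrable_const _).indicator hS.compl)
  have hjensen := convexOn_exp.map_integral_le Real.continuous_exp.continuousOn isClosed_univ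
    (by simp) hint hint_exp
  rw [integral_neg, integral_const_mul, integral_indicator_one hS] at hjensen
  calc ennexp (-(l * μ.real S))
      ≤ ENNReal.ofReal (∫ a, Real.exp (-(l * S.indicator 1 a)) ∂μ) :=
        ENNReal.ofReal_le_ofReal hjensen
    _ = ∫⁻ a, ennexp (-(l * S.indicator 1 a)) ∂μ :=
        ofReal_integral_eq_lintegral_ofReal hint_exp (.of_forall fun _ => (Real.exp_pos _).le)

theorem ennexp_toNat_sub_add_swap_le (l : ℝ) (b b' : Bool) :
    ennexp (l * (b.toNat - b'.toNat)) + ennexp (l * (b'.toNat - b.toNat)) ≤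
      2 * ennexp (l ^ 2 / 2) := by
  have hsq : ((b.toNat : ℝ) - b'.toNat) ^ 2 ≤ 1 := by cases b <;> cases b' <;> simp
  have hneg : l * ((b'.toNat : ℝ) - b.toNat) = -(l * (b.toNat - b'.toNat)) := by ring
  rw [hneg]
  refine (ennexp_add_ennexp_neg_le _).trans ?_
  gcongr
  refine ennexp_mono ?_
  nlinarith [mul_le_mul_of_nonneg_left hsq (sq_nonneg l)]

theorem lintegral_prod_sum_ennexp_mul_le [SFinite μ] (l : ℝ) {q : Bool → Bool → X × X → ENNReal}
    (hq : ∀ b b' p, q b b' p.swap = q b' b p) :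
    ∫⁻ p, ∑ b, ∑ b', ennexp (l * (b.toNat - b'.toNat)) * q b b' p ∂μ.prod μ ≤
      ennexp (l ^ 2 / 2) * ∫⁻ p, ∑ b, ∑ b', q b b' p ∂μ.prod μ := by
  set J := ∫⁻ p, ∑ b, ∑ b', ennexp (l * (b.toNat - b'.toNat)) * q b b' p ∂μ.prod μ
  have hswap : J = ∫⁻ p, ∑ b, ∑ b', ennexp (l * (b'.toNat - b.toNat)) * q b b' p ∂μ.prod μ := by
    rw [← lintegral_prod_swap]
    refine lintegral_congr fun p => ?_
    rw [Finset.sum_comm]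
    simp only [hq]
  have hpointwise (p : X × X) :
      ∑ b, ∑ b', ennexp (l * (b.toNat - b'.toNat)) * q b b' p +
        ∑ b, ∑ b', ennexp (l * (b'.toNat - b.toNat)) * q b b' p ≤
      2 * ennexp (l ^ 2 / 2) * ∑ b, ∑ b', q b b' p := by
    simp only [← Finset.sum_add_distrib, ← add_mul, Finset.mul_sum]
    gcongr
    exact ennexp_toNat_sub_add_swap_le l _ _
  have htwo : 2 * J ≤ 2 * (ennexp (l ^ 2 / 2) * ∫⁻ p, ∑ b, ∑ b', q b b' p ∂μ.prod μ) :=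
    calc 2 * J = J + ∫⁻ p, ∑ b, ∑ b', ennexp (l * (b'.toNat - b.toNat)) * q b b' p ∂μ.prod μ := by
          rw [← hswap, two_mul]
      _ ≤ ∫⁻ p, 2 * ennexp (l ^ 2 / 2) * ∑ b, ∑ b', q b b' p ∂μ.prod μ :=
          (le_lintegral_add _ _).trans (lintegral_mono hpointwise)
      _ = 2 * (ennexp (l ^ 2 / 2) * ∫⁻ p, ∑ b, ∑ b', q b b' p ∂μ.prod μ) := by
          rw [lintegral_const_mul' _ _ (ENNReal.mul_ne_top ENNReal.ofNat_ne_top (ennexp_ne_top _)),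
            mul_assoc]
  exact (ENNReal.mul_le_mul_iff_right two_ne_zero ENNReal.ofNat_ne_top).1 htwo

end Symmetrization

section ExponentialMoment

variable [MeasurableSpace X]

theorem measurable_hits {S : Set X} (hS : MeasurableSet S) (n : ℕ) :
    Measurable fun x : Node n → X => hits S x := by
  classical
  induction n with
  | zero => simp [hits]
  | succ n ih =>
    have hrec : (fun x : Node (n + 1) → X => hits S x) = fun x =>
        if x (root n) ∈ S then 1 + hits S (subtree true x) else hits S (subtree false x) := by
      funext x
      split_ifs with hx
      · exact hits_succ S x (b := true) (by simp [hx])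
      · simpa using hits_succ S x (b := false) (by simp [hx])
    rw [hrec]
    exact Measurable.ite (measurable_pi_apply (root n) hS)
      (measurable_const.add (ih.comp (measurable_subtree true)))
      (ih.comp (measurable_subtree false))

theorem measurable_iSup_prop {Ω : Type*} [MeasurableSpace Ω] {P : Ω → Prop}
    (hP : MeasurableSet {ω | P ω}) {f : Ω → ENNReal} (hf : Measurable f) :
    Measurable fun ω => ⨆ _ : P ω, f ω := by
  classical
  have hindicator : (fun ω => ⨆ _ : P ω, f ω) = {ω | P ω}.indicator f := by
    funext ω
    by_cases hω : P ω <;> simp [hω]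
  rw [hindicator]
  exact hf.indicator hP

theorem measurable_iSup_cut_cut {Ω : Type*} [MeasurableSpace Ω] {G : Set (Set X)}
    (hG : G.Countable) (hGm : ∀ S ∈ G, MeasurableSet S) {a a' : Ω → X} (ha : Measurable a)
    (ha' : Measurable a') (b b' : Bool) {f : Set X → Ω → ENNReal}
    (hf : ∀ S ∈ G, Measurable (f S)) :
    Measurable fun ω => ⨆ S ∈ cut (cut G (a ω) b) (a' ω) b', f S ω := by
  have hanswer {S : Set X} (hS : S ∈ G) {a : Ω → X} (ha : Measurable a) (b : Bool) :
      MeasurableSet {ω | a ω ∈ S ↔ b = true} := by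
    cases b
    · simpa [Set.preimage, Set.compl_ofPred] using (ha (hGm S hS)).compl
    · simpa [Set.preimage] using ha (hGm S hS)
  simp only [mem_cut, iSup_and]
  exact Measurable.biSup G hG fun S hS => measurable_iSup_prop (hanswer hS ha b)
    (measurable_iSup_prop (hanswer hS ha' b') (hf S hS))

variable (μ : Measure X)

/-- `exp (l * n * (test(x̄, S) - μ(S)))`, the exponential of the scaled error of the estimate of
`μ(S)` given by the test tree `x`. -/
noncomputable def expDeviation (l : ℝ) (S : Set X) {n : ℕ} (x : Node n → X) : ENNReal :=
  ennexp (l * (hits S x - n * μ.real S))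

/-- The expectation over random test trees of height `n` of the largest `expDeviation` of a member
of `G`. -/
noncomputable def expMoment (l : ℝ) (n : ℕ) (G : Set (Set X)) : ENNReal :=
  ∫⁻ x, ⨆ S ∈ G, expDeviation μ l S x ∂treeMeasure μ n

theorem measurable_expDeviation (l : ℝ) {S : Set X} (hS : MeasurableSet S) (n : ℕ) :
    Measurable fun x : Node n → X => expDeviation μ l S x :=
  measurable_ennexp.comp
    ((((measurable_from_top (f := Nat.cast)).comp (measurable_hits hS n)).sub_const _).const_mul l)

/-- What remains of the `expDeviation` of a test tree of height `n + 1`, maximized over the members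
of `G` that give the answer `b` at the root, once the summand `μ(S)` of that level is replaced by
the indicator of `S` at a ghost draw. The argument is `(y, a, a')`, where `y` is the subtree below
the answer `b`, `a` the root label and `a'` the ghost draw. -/
noncomputable def ghostBound (l : ℝ) (G : Set (Set X)) (b : Bool) {n : ℕ}
    (z : (Node n → X) × X × X) : ENNReal :=
  ∑ b' : Bool, ennexp (l * (b.toNat - b'.toNat)) *
    ⨆ S ∈ cut (cut G z.2.1 b) z.2.2 b', expDeviation μ l S z.1

theorem measurable_ghostBound (l : ℝ) {G : Set (Set X)} (hG : G.Countable)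
    (hGm : ∀ S ∈ G, MeasurableSet S) (b : Bool) (n : ℕ) :
    Measurable fun z : (Node n → X) × X × X => ghostBound μ l G b z :=
  Finset.measurable_fun_sum _ fun b' _ => Measurable.const_mul
    (measurable_iSup_cut_cut hG hGm measurable_snd.fst measurable_snd.snd b b' fun S hS =>
      (measurable_expDeviation μ l (hGm S hS) n).comp measurable_fst) _

theorem lintegral_ghostBound (l : ℝ) {G : Set (Set X)} (hG : G.Countable)
    (hGm : ∀ S ∈ G, MeasurableSet S) (b : Bool) (n : ℕ) (p : X × X) :
    ∫⁻ y, ghostBound μ l G b (y, p) ∂treeMeasure μ n = ∑ b' : Bool,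
      ennexp (l * (b.toNat - b'.toNat)) * expMoment μ l n (cut (cut G p.1 b) p.2 b') := by
  have hmeas (b' : Bool) : Measurable fun y : Node n → X =>
      ⨆ S ∈ cut (cut G p.1 b) p.2 b', expDeviation μ l S y := by
    have hsub : cut (cut G p.1 b) p.2 b' ⊆ G := (cut_subset _ _ _).trans (cut_subset _ _ _)
    exact Measurable.biSup _ (hG.mono hsub) fun S hS =>
      measurable_expDeviation μ l (hGm S (hsub hS)) n
  simp only [ghostBound, expMoment]
  rw [lintegral_finsetSum _ fun b' _ => (hmeas b').const_mul _]
  exact Finset.sum_congr rfl fun b' _ => lintegral_const_mul _ (hmeas b')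

variable [IsProbabilityMeasure μ]

theorem expDeviation_succ_le_lintegral (l : ℝ) {S : Set X} (hS : MeasurableSet S) {n : ℕ}
    (x : Node (n + 1) → X) {b : Bool} (hb : x (root n) ∈ S ↔ b = true) :
    expDeviation μ l S x ≤
      ∫⁻ a', ennexp (l * (b.toNat - S.indicator 1 a')) * expDeviation μ l S (subtree b x) ∂μ := by
  have hsplit : expDeviation μ l S x =
      ennexp (l * b.toNat) * expDeviation μ l S (subtree b x) * ennexp (-(l * μ.real S)) := by
    rw [expDeviation, expDeviation, hits_succ S x hb, ← ennexp_add, ← ennexp_add]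
    congr 1
    push_cast
    ring
  calc expDeviation μ l S x
      ≤ ennexp (l * b.toNat) * expDeviation μ l S (subtree b x) *
          ∫⁻ a', ennexp (-(l * S.indicator 1 a')) ∂μ := by
        rw [hsplit]
        gcongr
        exact ennexp_neg_mul_measureReal_le_lintegral μ hS l
    _ = ∫⁻ a', ennexp (l * (b.toNat - S.indicator 1 a')) *
          expDeviation μ l S (subtree b x) ∂μ := by
        have hne_top : ennexp (l * b.toNat) * expDeviation μ l S (subtree b x) ≠ ⊤ :=
          ENNReal.mul_ne_top (ennexp_ne_top _) (ennexp_ne_top _)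
        rw [← lintegral_const_mul' _ _ hne_top]
        refine lintegral_congr fun a' => ?_
        rw [mul_sub, sub_eq_add_neg, ennexp_add, mul_right_comm]

theorem iSup_expDeviation_succ_le (l : ℝ) {G : Set (Set X)} (hGm : ∀ S ∈ G, MeasurableSet S)
    {n : ℕ} (x : Node (n + 1) → X) :
    ⨆ S ∈ G, expDeviation μ l S x ≤
      ∑ b, ∫⁻ a', ghostBound μ l G b (subtree b x, x (root n), a') ∂μ := by
  classical
  refine iSup₂_le fun S hS => ?_
  set b := decide (x (root n) ∈ S) with hb
  have hb_iff : x (root n) ∈ S ↔ b = true := by simp [hb]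
  have hghost (a' : X) :
      ennexp (l * (b.toNat - S.indicator 1 a')) * expDeviation μ l S (subtree b x) ≤
        ghostBound μ l G b (subtree b x, x (root n), a') := by
    have hindicator : S.indicator 1 a' = ((decide (a' ∈ S)).toNat : ℝ) := by
      by_cases ha' : a' ∈ S <;> simp [ha']
    have hmem : S ∈ cut (cut G (x (root n)) b) a' (decide (a' ∈ S)) := ⟨⟨hS, hb_iff⟩, by simp⟩
    refine le_trans ?_ (Finset.single_le_sum (fun _ _ => zero_le)
      (Finset.mem_univ (decide (a' ∈ S))))
    rw [hindicator]
    gcongr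
    exact le_iSup₂_of_le S hmem le_rfl
  calc expDeviation μ l S x
      ≤ ∫⁻ a', ghostBound μ l G b (subtree b x, x (root n), a') ∂μ :=
        (expDeviation_succ_le_lintegral μ l (hGm S hS) x hb_iff).trans (lintegral_mono hghost)
    _ ≤ ∑ b, ∫⁻ a', ghostBound μ l G b (subtree b x, x (root n), a') ∂μ :=
        Finset.single_le_sum
          (f := fun b => ∫⁻ a', ghostBound μ l G b (subtree b x, x (root n), a') ∂μ)
          (fun _ _ => zero_le) (Finset.mem_univ b)

theorem expMoment_succ_le_lintegral (l : ℝ) (n : ℕ) {G : Set (Set X)} (hG : G.Countable)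
    (hGm : ∀ S ∈ G, MeasurableSet S) :
    expMoment μ l (n + 1) G ≤ ∫⁻ p, ∑ b : Bool, ∑ b' : Bool, ennexp (l * (b.toNat - b'.toNat)) *
      expMoment μ l n (cut (cut G p.1 b) p.2 b') ∂μ.prod μ := by
  have hmeas (b : Bool) := measurable_ghostBound μ l hG hGm b n
  have hmeas_node (b : Bool) : Measurable fun z : (Node (n + 1) → X) × X =>
      (subtree b z.1, z.1 (root n), z.2) :=
    ((measurable_subtree b).comp measurable_fst).prodMk
      (((measurable_pi_apply (root n)).comp measurable_fst).prodMk measurable_snd)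
  calc expMoment μ l (n + 1) G
      ≤ ∫⁻ x, ∑ b, ∫⁻ a', ghostBound μ l G b (subtree b x, x (root n), a') ∂μ
          ∂treeMeasure μ (n + 1) :=
        lintegral_mono (iSup_expDeviation_succ_le μ l hGm)
    _ = ∑ b, ∫⁻ x, ∫⁻ a', ghostBound μ l G b (subtree b x, x (root n), a') ∂μ
          ∂treeMeasure μ (n + 1) :=
        lintegral_finsetSum _ fun b _ =>
          ((hmeas b).comp (hmeas_node b)).lintegral_prod_right'
    _ = ∑ b, ∫⁻ p, ∫⁻ y, ghostBound μ l G b (y, p) ∂treeMeasure μ n ∂μ.prod μ :=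
        Finset.sum_congr rfl fun b _ => lintegral_lintegral_subtree_root μ b (hmeas b)
    _ = ∫⁻ p, ∑ b, ∫⁻ y, ghostBound μ l G b (y, p) ∂treeMeasure μ n ∂μ.prod μ :=
        (lintegral_finsetSum _ fun b _ => (hmeas b).lintegral_prod_left').symm
    _ = _ := by simp only [lintegral_ghostBound μ l hG hGm]

theorem expMoment_zero_le (l : ℝ) (G : Set (Set X)) :
    expMoment μ l 0 G ≤ thicketShatter G 0 := by
  have : Nonempty X := nonempty_of_isProbabilityMeasure μ
  have hpointwise (x : Node 0 → X) :
      ⨆ S ∈ G, expDeviation μ l S x ≤ (thicketShatter G 0 : ENNReal) := by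
    refine iSup₂_le fun S hS => ?_
    have hone : expDeviation μ l S x = 1 := by simp [expDeviation, hits, ennexp_zero]
    rw [hone]
    exact_mod_cast thicketShatter_pos ⟨S, hS⟩ 0
  exact (lintegral_mono hpointwise).trans (by simp)

theorem expMoment_le (l : ℝ) (n : ℕ) {G : Set (Set X)} (hG : G.Countable)
    (hGm : ∀ S ∈ G, MeasurableSet S) :
    expMoment μ l n G ≤ ennexp (l ^ 2 / 2) ^ n * thicketShatter G (2 * n) := by
  induction n generalizing G with
  | zero => simpa using expMoment_zero_le μ l G
  | succ n ih =>
    have hcut (p : X × X) : ∑ b, ∑ b', expMoment μ l n (cut (cut G p.1 b) p.2 b') ≤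
        ennexp (l ^ 2 / 2) ^ n * thicketShatter G (2 * (n + 1)) :=
      calc ∑ b, ∑ b', expMoment μ l n (cut (cut G p.1 b) p.2 b')
          ≤ ∑ b, ∑ b', ennexp (l ^ 2 / 2) ^ n *
              (thicketShatter (cut (cut G p.1 b) p.2 b') (2 * n) : ENNReal) := by
            gcongr with b _ b' _
            have hsub : cut (cut G p.1 b) p.2 b' ⊆ G := (cut_subset _ _ _).trans (cut_subset _ _ _)
            exact ih (hG.mono hsub) fun S hS => hGm S (hsub hS)
        _ = ennexp (l ^ 2 / 2) ^ n *
              (∑ b, ∑ b', thicketShatter (cut (cut G p.1 b) p.2 b') (2 * n) : ℕ) := by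
            push_cast
            simp only [Finset.mul_sum]
        _ ≤ ennexp (l ^ 2 / 2) ^ n * thicketShatter G (2 * (n + 1)) := by
            gcongr
            exact sum_sum_thicketShatter_cut_cut_le G p.1 p.2 (2 * n)
    calc expMoment μ l (n + 1) G
        ≤ ∫⁻ p, ∑ b, ∑ b', ennexp (l * (b.toNat - b'.toNat)) *
            expMoment μ l n (cut (cut G p.1 b) p.2 b') ∂μ.prod μ :=
          expMoment_succ_le_lintegral μ l n hG hGm
      _ ≤ ennexp (l ^ 2 / 2) *
            ∫⁻ p, ∑ b, ∑ b', expMoment μ l n (cut (cut G p.1 b) p.2 b') ∂μ.prod μ :=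
          lintegral_prod_sum_ennexp_mul_le μ l fun b b' p => by
            rw [Prod.fst_swap, Prod.snd_swap, cut_comm]
      _ ≤ ennexp (l ^ 2 / 2) *
            ∫⁻ _, ennexp (l ^ 2 / 2) ^ n * thicketShatter G (2 * (n + 1)) ∂μ.prod μ := by
          gcongr with p
          exact hcut p
      _ = ennexp (l ^ 2 / 2) ^ (n + 1) * thicketShatter G (2 * (n + 1)) := by
          rw [lintegral_const, measure_univ, mul_one, pow_succ' (ennexp _), mul_assoc]

end ExponentialMoment

section Tail

variable [MeasurableSpace X] (μ : Measure X) [IsProbabilityMeasure μ]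

theorem treeMeasure_exists_le_mul_deviation_le (l c : ℝ) (n : ℕ) {F : Set (Set X)}
    (hF : F.Countable) (hFm : ∀ S ∈ F, MeasurableSet S) :
    treeMeasure μ n {x | ∃ S ∈ F, c ≤ l * (hits S x - n * μ.real S)} ≤
      ennexp (n * (l ^ 2 / 2) - c) * thicketShatter F (2 * n) := by
  set bad := {x : Node n → X | ∃ S ∈ F, c ≤ l * (hits S x - n * μ.real S)}
  have hsub : bad ⊆ {x | ennexp c ≤ ⨆ S ∈ F, expDeviation μ l S x} := by
    rintro x ⟨S, hS, hc⟩
    exact le_iSup₂_of_le (f := fun S _ => expDeviation μ l S x) S hS (ennexp_mono hc)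
  have hmarkov : ennexp c * treeMeasure μ n bad ≤ expMoment μ l n F := by
    refine le_trans ?_ (mul_meas_ge_le_lintegral (Measurable.biSup F hF fun S hS =>
      measurable_expDeviation μ l (hFm S hS) n) (ennexp c))
    gcongr
  calc treeMeasure μ n bad
      = ennexp (-c) * (ennexp c * treeMeasure μ n bad) := by
        rw [← mul_assoc, ← ennexp_add, neg_add_cancel, ennexp_zero, one_mul]
    _ ≤ ennexp (-c) * (ennexp (l ^ 2 / 2) ^ n * thicketShatter F (2 * n)) := by
        gcongr ennexp (-c) * ?_
        exact hmarkov.trans (expMoment_le μ l n hF hFm)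
    _ = ennexp (n * (l ^ 2 / 2) - c) * thicketShatter F (2 * n) := by
        rw [← ennexp_nat_mul, ← mul_assoc, ← ennexp_add, neg_add_eq_sub]

theorem treeMeasure_exists_lt_abs_ttest_sub_le {n : ℕ} (hn : 0 < n) {ε : ℝ} (hε : 0 < ε)
    {F : Set (Set X)} (hF : F.Countable) (hFm : ∀ S ∈ F, MeasurableSet S) :
    treeMeasure μ n {x | ∃ S ∈ F, ε < |ttest S x - μ.real S|} ≤
      ENNReal.ofReal (2 * (thicketShatter F n * Real.exp (-(n * ε ^ 2) / 4)) ^ 2) := by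
  have hn' : (0 : ℝ) < n := by exact_mod_cast hn
  have hsub : {x : Node n → X | ∃ S ∈ F, ε < |ttest S x - μ.real S|} ⊆
      {x | ∃ S ∈ F, n * ε ^ 2 ≤ ε * (hits S x - n * μ.real S)} ∪
        {x | ∃ S ∈ F, n * ε ^ 2 ≤ -ε * (hits S x - n * μ.real S)} := by
    rintro x ⟨S, hS, hdev⟩
    rw [ttest_sub_eq_div S hn, lt_abs, ← neg_div, lt_div_iff₀ hn', lt_div_iff₀ hn'] at hdev
    exact hdev.imp (fun h => ⟨S, hS, by nlinarith⟩) fun h => ⟨S, hS, by nlinarith⟩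
  have hexp : ennexp (n * (ε ^ 2 / 2) - n * ε ^ 2) =
      ENNReal.ofReal (Real.exp (-(n * ε ^ 2) / 4) ^ 2) := by
    rw [ennexp, ← Real.exp_nat_mul]
    congr 2
    push_cast
    ring
  have hpos := treeMeasure_exists_le_mul_deviation_le μ ε (n * ε ^ 2) n hF hFm
  have hneg := treeMeasure_exists_le_mul_deviation_le μ (-ε) (n * ε ^ 2) n hF hFm
  rw [neg_sq] at hneg
  calc treeMeasure μ n {x | ∃ S ∈ F, ε < |ttest S x - μ.real S|}
      ≤ 2 * (ennexp (n * (ε ^ 2 / 2) - n * ε ^ 2) * thicketShatter F (2 * n)) := by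
        rw [two_mul (ennexp _ * _)]
        exact (measure_mono hsub).trans ((measure_union_le _ _).trans (add_le_add hpos hneg))
    _ ≤ 2 * (ennexp (n * (ε ^ 2 / 2) - n * ε ^ 2) *
          (thicketShatter F n * thicketShatter F n : ℕ)) := by
        gcongr
        exact (two_mul n).symm ▸ thicketShatter_add_le F n n
    _ = ENNReal.ofReal (2 * (thicketShatter F n * Real.exp (-(n * ε ^ 2) / 4)) ^ 2) := by
        rw [hexp, mul_pow, ENNReal.ofReal_mul zero_le_two, mul_comm (_ ^ 2),
          ENNReal.ofReal_mul (by positivity), ENNReal.ofReal_ofNat, ← sq, ← ENNReal.ofReal_natCast,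
          Nat.cast_pow]

end Tail

end Thicket

open Thicket in
theorem vc_theorem_for_thickets_general {X : Type*} [MeasurableSpace X] (μ : Measure X)
    [IsProbabilityMeasure μ] {F : Set (Set X)} (hF : F.Countable)
    (hFm : ∀ S ∈ F, MeasurableSet S) {n : ℕ} (hn : 1 ≤ n) {ε : ℝ} (hε : 0 < ε) :
    (Measure.pi fun _ : Σ i : Fin n, (Fin i.1 → Bool) => μ)
        {x | ∃ S ∈ F, ε < |ttest S x - (μ S).toReal|} ≤
      ENNReal.ofReal (2 * thicketShatter F n * Real.exp (-(n * ε ^ 2) / 4)) := by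
  set t : ℝ := thicketShatter F n * Real.exp (-(n * ε ^ 2) / 4) with ht
  have ht_nonneg : 0 ≤ t := by positivity
  rw [mul_assoc, ← ht]
  -- A probability that is at most `2 * t ^ 2` and at most `1` is at most `2 * t`.
  rcases le_total t 1 with ht_le | ht_ge
  · refine (treeMeasure_exists_lt_abs_ttest_sub_le μ hn hε hF hFm).trans ?_
    exact ENNReal.ofReal_le_ofReal (by nlinarith)
  · exact prob_le_one.trans (ENNReal.one_le_ofReal.2 (by linarith))

/-- VC-theorem for thickets: for a finite probability space `(X, μ)` and a family `F` of
subsets of `X`, the `μ^{2^n−1}`-probability that a random test tree of height `n` gives an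
estimate of `μ(S)` off by more than `ε` for some `S ∈ F` is at most
`8·ρ_F(n)·exp(−nε²/32)`. -/
theorem vc_theorem_for_thickets {X : Type*} [Fintype X] [MeasurableSpace X]
    [MeasurableSingletonClass X] (μ : Measure X) [IsProbabilityMeasure μ]
    (F : Set (Set X)) (n : ℕ) (hn : 1 ≤ n) (ε : ℝ) (hε : 0 < ε) :
    (Measure.pi (fun _ : Σ i : Fin n, (Fin i.1 → Bool) => μ))
        {x | ∃ S ∈ F, ε < |ttest S x - (μ S).toReal|} ≤
      ENNReal.ofReal (8 * (thicketShatter F n : ℝ) * Real.exp (-(n * ε ^ 2) / 32)) := by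
  refine (vc_theorem_for_thickets_general μ F.to_countable
    (fun S _ => S.toFinite.measurableSet) hn hε).trans (ENNReal.ofReal_le_ofReal ?_)
  gcongr ?_ * _ * Real.exp ?_
  · norm_num
  · nlinarith [mul_nonneg n.cast_nonneg (sq_nonneg ε)]
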